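/- Let H be a real Hilbert space, let λ > 0, and let a ∈ H. Then the unique minimizer over H of y ↦ (1/2)‖a − y‖² + λ‖y‖ is 0 if ‖a‖ ≤ λ, and is (1 − λ/‖a‖)·a if ‖a‖ > λ. -/

import Mathlib

/-!
`p` minimizes `y ↦ (1/2)‖a − y‖² + f y` as soon as `a − p` is a subgradient of `f` at `p`: expanding
the square around `p`, the objective exceeds its value at `p` by at least `(1/2)‖y − p‖²`, which
also gives uniqueness. For `f = λ‖·‖`, Cauchy–Schwarz turns `‖g‖ ≤ λ` and `⟪g, p⟫ = λ‖p‖` into the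
subgradient inequality, and the residual of block soft-thresholding satisfies both.
-/

open Set
open scoped RealInnerProductSpace

/-- The proximal operator of `f` at `a`, as the set of all global minimizers, so that existence and
uniqueness of the proximal point together say that it is a singleton. -/
def prox {E : Type*} [SeminormedAddCommGroup E] (f : E → ℝ) (a : E) : Set E :=
  {p | IsMinOn (fun y : E => (1 / 2 : ℝ) * ‖a - y‖ ^ 2 + f y) univ p}

/-- `g` is a subgradient of `f` at `x`, i.e. `g ∈ ∂f(x)`, the dual space being represented by the
inner product. -/
def IsSubgradientAt {E : Type*} [SeminormedAddCommGroup E] [InnerProductSpace ℝ E]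
    (f : E → ℝ) (g x : E) : Prop :=
  ∀ y, f x + ⟪g, y - x⟫ ≤ f y

/-- Block soft-thresholding at level `lam`: the norm is lowered by `lam`, and the ball of radius
`lam` is collapsed to `0`. -/
noncomputable def blockSoftThreshold {E : Type*} [SeminormedAddCommGroup E] [NormedSpace ℝ E]
    (lam : ℝ) (a : E) : E :=
  if ‖a‖ ≤ lam then 0 else (1 - lam / ‖a‖) • a

section Seminormed

variable {E : Type*} [SeminormedAddCommGroup E]

section NormedSpace

variable [NormedSpace ℝ E] {lam : ℝ} {a : E}

theorem blockSoftThreshold_of_norm_le (h : ‖a‖ ≤ lam) : blockSoftThreshold lam a = 0 :=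
  if_pos h

theorem blockSoftThreshold_of_lt_norm (h : lam < ‖a‖) :
    blockSoftThreshold lam a = (1 - lam / ‖a‖) • a :=
  if_neg h.not_ge

theorem sub_blockSoftThreshold_of_lt_norm (h : lam < ‖a‖) :
    a - blockSoftThreshold lam a = (lam / ‖a‖) • a := by
  rw [blockSoftThreshold_of_lt_norm h]
  module

theorem norm_blockSoftThreshold (hlam : 0 ≤ lam) (a : E) :
    ‖blockSoftThreshold lam a‖ = max (‖a‖ - lam) 0 := by
  rcases le_or_gt ‖a‖ lam with h | h
  · rw [blockSoftThreshold_of_norm_le h, norm_zero, max_eq_right (sub_nonpos.mpr h)]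
  · have ha : 0 < ‖a‖ := hlam.trans_lt h
    have hcoef : 0 ≤ 1 - lam / ‖a‖ := sub_nonneg.mpr ((div_le_one ha).mpr h.le)
    rw [blockSoftThreshold_of_lt_norm h, norm_smul_of_nonneg hcoef, sub_mul, one_mul,
      div_mul_cancel₀ _ ha.ne', max_eq_left (sub_nonneg.mpr h.le)]

theorem norm_sub_blockSoftThreshold_le (hlam : 0 ≤ lam) (a : E) :
    ‖a - blockSoftThreshold lam a‖ ≤ lam := by
  rcases le_or_gt ‖a‖ lam with h | h
  · rwa [blockSoftThreshold_of_norm_le h, sub_zero]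
  · have ha : 0 < ‖a‖ := hlam.trans_lt h
    rw [sub_blockSoftThreshold_of_lt_norm h, norm_smul_of_nonneg (by positivity),
      div_mul_cancel₀ _ ha.ne']

end NormedSpace

variable [InnerProductSpace ℝ E] {f : E → ℝ} {a g p x : E} {lam : ℝ}

theorem IsSubgradientAt.add_half_norm_sub_sq_le (h : IsSubgradientAt f (a - p) p) (y : E) :
    (1 / 2 : ℝ) * ‖a - p‖ ^ 2 + f p + (1 / 2 : ℝ) * ‖y - p‖ ^ 2 ≤
      (1 / 2 : ℝ) * ‖a - y‖ ^ 2 + f y := by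
  have hexpand := norm_sub_sq_real (a - p) (y - p)
  rw [sub_sub_sub_cancel_right] at hexpand
  linarith [h y]

theorem IsSubgradientAt.mem_prox (h : IsSubgradientAt f (a - p) p) : p ∈ prox f a :=
  fun y _ => (le_add_of_nonneg_right (by positivity)).trans (h.add_half_norm_sub_sq_le y)

theorem isSubgradientAt_mul_norm (hg : ‖g‖ ≤ lam) (hgx : ⟪g, x⟫ = lam * ‖x‖) :
    IsSubgradientAt (fun y => lam * ‖y‖) g x := fun y =>
  calc
    lam * ‖x‖ + ⟪g, y - x⟫ = ⟪g, y⟫ := by rw [inner_sub_right, hgx, add_sub_cancel]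
    _ ≤ ‖g‖ * ‖y‖ := real_inner_le_norm g y
    _ ≤ lam * ‖y‖ := by gcongr

theorem inner_sub_blockSoftThreshold (hlam : 0 ≤ lam) (a : E) :
    ⟪a - blockSoftThreshold lam a, blockSoftThreshold lam a⟫ =
      lam * ‖blockSoftThreshold lam a‖ := by
  rcases le_or_gt ‖a‖ lam with h | h
  · rw [blockSoftThreshold_of_norm_le h, inner_zero_right, norm_zero, mul_zero]
  · have ha : ‖a‖ ≠ 0 := (hlam.trans_lt h).ne'
    rw [norm_blockSoftThreshold hlam, max_eq_left (sub_nonneg.mpr h.le),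
      sub_blockSoftThreshold_of_lt_norm h, blockSoftThreshold_of_lt_norm h,
      real_inner_smul_left, real_inner_smul_right, real_inner_self_eq_norm_sq]
    field_simp

theorem isSubgradientAt_sub_blockSoftThreshold (hlam : 0 ≤ lam) (a : E) :
    IsSubgradientAt (fun y => lam * ‖y‖) (a - blockSoftThreshold lam a)
      (blockSoftThreshold lam a) :=
  isSubgradientAt_mul_norm (norm_sub_blockSoftThreshold_le hlam a)
    (inner_sub_blockSoftThreshold hlam a)

end Seminormed

theorem IsSubgradientAt.prox_eq_singleton {E : Type*} [NormedAddCommGroup E]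
    [InnerProductSpace ℝ E] {f : E → ℝ} {a p : E} (h : IsSubgradientAt f (a - p) p) :
    prox f a = {p} := by
  refine eq_singleton_iff_unique_mem.mpr ⟨h.mem_prox, fun q hq => ?_⟩
  have hgrowth := h.add_half_norm_sub_sq_le q
  have hmin : (1 / 2 : ℝ) * ‖a - q‖ ^ 2 + f q ≤ (1 / 2 : ℝ) * ‖a - p‖ ^ 2 + f p := hq (mem_univ p)
  have hdist : ‖q - p‖ ^ 2 ≤ 0 := by linarith
  exact sub_eq_zero.mp (norm_eq_zero.mp (sq_nonpos_iff _ |>.mp hdist))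

theorem prox_norm_blockSoftThreshold_general {E : Type*} [NormedAddCommGroup E]
    [InnerProductSpace ℝ E] {lam : ℝ} (hlam : 0 ≤ lam) (a : E) :
    prox (fun y => lam * ‖y‖) a = {blockSoftThreshold lam a} :=
  (isSubgradientAt_sub_blockSoftThreshold hlam a).prox_eq_singleton

/-- Block soft-thresholding: the unique minimizer over a real Hilbert space `H` of
`y ↦ (1/2)‖a − y‖² + λ‖y‖` is `0` when `‖a‖ ≤ λ` and `(1 − λ/‖a‖) • a` when `‖a‖ > λ`. -/
theorem prox_norm_blockSoftThreshold {H : Type*}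
    [NormedAddCommGroup H] [InnerProductSpace ℝ H] [CompleteSpace H]
    (lam : ℝ) (hlam : 0 < lam) (a : H) :
    IsMinOn (fun y : H => (1/2 : ℝ) * ‖a - y‖^2 + lam * ‖y‖) Set.univ
        (if ‖a‖ ≤ lam then (0 : H) else (1 - lam / ‖a‖) • a) ∧
      ∀ q : H, IsMinOn (fun y : H => (1/2 : ℝ) * ‖a - y‖^2 + lam * ‖y‖) Set.univ q →
        q = (if ‖a‖ ≤ lam then (0 : H) else (1 - lam / ‖a‖) • a) :=
  eq_singleton_iff_unique_mem.mp (prox_norm_blockSoftThreshold_general hlam.le a)
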